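/- (Proposition 2, sufficiency.) Under imperfect sensing, if q_b satisfies λ_p / (𝒫_D r_{p,max} + (1−𝒫_D) r_p0) ≤ q_b ≤ min{ λ_p / (𝒫_D r_p0), 1 }, then there exist nonnegative conditional probabilities q(s,i|b), q(s,i|e) with Σ_{s,i} q(s,i|b) = 1 and Σ_{s,i} q(s,i|e) = 1 satisfying the rate-balance equation q_b 𝒫_D Σ_{s,i} r_p(s,i) q(s,i|b) + q_b (1−𝒫_D) r_p0 Σ_s q(s,0|e) = λ_p; such a witness is a convex combination α q¹ + (1−α) q² of the extreme choices q¹ (all busy-mass on a zero-power control, all idle-mass on positive-power controls) and q² (all busy-mass on an index (s*,i*) maximizing r_p, all idle-mass on zero-power controls). -/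

import Mathlib

open Finset

/-!
For fixed `q_b`, the left-hand side of the rate-balance equation is `q_b` times a linear function
of the pair `(q(·|b), q(·|e))`. This function takes the value `𝒫_D r_p0` at the extreme pair `q¹`
and `𝒫_D r_{p,max} + (1 - 𝒫_D) r_p0` at the extreme pair `q²`. The bounds on `q_b` say exactly that
`λ_p` lies between `q_b` times these two values, so it is attained on the segment from `q¹` to
`q²`, which stays inside the convex set of admissible pairs.
-/

theorem exists_mem_segment_map_eq {K E : Type*} [Field K] [LinearOrder K] [IsStrictOrderedRing K]
    [AddCommGroup E] [Module K E] (f : E →ₗ[K] K) {x y : E} {c : K}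
    (hx : f x ≤ c) (hy : c ≤ f y) : ∃ z ∈ segment K x y, f z = c := by
  have hc : c ∈ segment K (f x) (f y) := by
    rw [segment_eq_Icc (hx.trans hy)]
    exact ⟨hx, hy⟩
  rwa [← LinearMap.coe_toAffineMap, ← image_segment] at hc

section Controls

variable {K S : Type*} {κ : S → Type*}

section Simplex

variable [Fintype S] [∀ s, Fintype (κ s)] [Semiring K] [PartialOrder K]

variable (K κ) in
/-- The conditional distributions `q(s, i)` over pairs of a user `s` and a control `i : κ s`. They
are kept in curried form, rather than as a `stdSimplex` over a sigma type, to match the double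
sums of the rate-balance equation. -/
def controlSimplex : Set (∀ s, κ s → K) :=
  {q | (∀ s i, 0 ≤ q s i) ∧ ∑ s, ∑ i, q s i = 1}

theorem convex_controlSimplex [IsOrderedRing K] : Convex K (controlSimplex K κ) := by
  rintro p ⟨hp_nonneg, hp_sum⟩ q ⟨hq_nonneg, hq_sum⟩ a b ha hb hab
  refine ⟨fun s i ↦ add_nonneg (mul_nonneg ha (hp_nonneg s i)) (mul_nonneg hb (hq_nonneg s i)), ?_⟩
  simp only [Pi.add_apply, Pi.smul_apply, smul_eq_mul, sum_add_distrib, ← mul_sum, hp_sum, hq_sum,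
    mul_one, hab]

end Simplex

section Dirac

variable [DecidableEq S] [∀ s, DecidableEq (κ s)]

variable (K) in
/-- The point mass at control `i` of user `s`; the extreme choices `q¹` and `q²` are pairs of
these. -/
def controlDirac [Zero K] [One K] (s : S) (i : κ s) : ∀ t, κ t → K :=
  Pi.single s (Pi.single i 1)

theorem controlDirac_nonneg [Zero K] [One K] [Preorder K] [ZeroLEOneClass K] (s : S)
    (i : κ s) : 0 ≤ controlDirac K s i :=
  Pi.single_nonneg.2 (Pi.single_nonneg.2 zero_le_one)

variable [Fintype S]

theorem sum_mul_controlDirac [∀ s, Fintype (κ s)] [NonAssocSemiring K] (f : ∀ s, κ s → K)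
    (s : S) (i : κ s) : ∑ t, ∑ j, f t j * controlDirac K s i t j = f s i := by
  rw [Fintype.sum_eq_single s fun t ht ↦ by simp [controlDirac, ht]]
  simp [controlDirac, Pi.single_apply]

theorem controlDirac_mem_controlSimplex [∀ s, Fintype (κ s)] [Semiring K] [PartialOrder K]
    [ZeroLEOneClass K] (s : S) (i : κ s) : controlDirac K s i ∈ controlSimplex K κ :=
  ⟨controlDirac_nonneg s i,
    by simpa only [one_mul] using sum_mul_controlDirac (fun _ _ ↦ (1 : K)) s i⟩

theorem sum_controlDirac_apply_zero [∀ s, Zero (κ s)] [AddCommMonoidWithOne K] (s : S) (i : κ s) :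
    ∑ t, controlDirac K s i t 0 = if i = 0 then 1 else 0 := by
  rw [Fintype.sum_eq_single s fun t ht ↦ by simp [controlDirac, ht]]
  simp [controlDirac, Pi.single_apply, eq_comm]

end Dirac

section ServiceRate

variable [Fintype S] [∀ s, Fintype (κ s)] [∀ s, Zero (κ s)] [CommRing K]

/-- The expected service rate of a busy primary user with detection probability `PD`, as a function
of the pair `(q(·|b), q(·|e))`: a missed detection makes the secondary users draw their control
from `q(·|e)`, and the primary user then succeeds, at rate `rp0`, only under zero power. -/
def puServiceRate (rp : ∀ s, κ s → K) (rp0 PD : K) :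
    (∀ s, κ s → K) × (∀ s, κ s → K) →ₗ[K] K where
  toFun q := PD * ∑ s, ∑ i, rp s i * q.1 s i + (1 - PD) * rp0 * ∑ s, q.2 s 0
  map_add' p q := by
    simp only [Prod.fst_add, Prod.snd_add, Pi.add_apply, mul_add, sum_add_distrib]
    ring
  map_smul' a q := by
    simp only [Prod.smul_fst, Prod.smul_snd, Pi.smul_apply, smul_eq_mul, RingHom.id_apply,
      mul_left_comm _ a, ← mul_sum]
    ring

theorem puServiceRate_apply (rp : ∀ s, κ s → K) (rp0 PD : K) (qB qE : ∀ s, κ s → K) :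
    puServiceRate rp rp0 PD (qB, qE) =
      PD * ∑ s, ∑ i, rp s i * qB s i + (1 - PD) * rp0 * ∑ s, qE s 0 :=
  rfl

variable [DecidableEq S] [∀ s, DecidableEq (κ s)]

theorem puServiceRate_controlDirac_of_ne_zero (rp : ∀ s, κ s → K) (rp0 PD : K) {s t : S}
    (i : κ s) {j : κ t} (hj : j ≠ 0) :
    puServiceRate rp rp0 PD (controlDirac K s i, controlDirac K t j) = PD * rp s i := by
  rw [puServiceRate_apply, sum_mul_controlDirac, sum_controlDirac_apply_zero, if_neg hj, mul_zero,
    add_zero]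

theorem puServiceRate_controlDirac_zero (rp : ∀ s, κ s → K) (rp0 PD : K) {s : S} (t : S)
    (i : κ s) :
    puServiceRate rp rp0 PD (controlDirac K s i, controlDirac K t 0) =
      PD * rp s i + (1 - PD) * rp0 := by
  rw [puServiceRate_apply, sum_mul_controlDirac, sum_controlDirac_apply_zero, if_pos rfl, mul_one]

end ServiceRate

section RateBalance

variable [Fintype S] [∀ s, Fintype (κ s)] [∀ s, Zero (κ s)]
  [Field K] [LinearOrder K] [IsStrictOrderedRing K]

theorem exists_mem_segment_mul_puServiceRate_eq [DecidableEq S] [∀ s, DecidableEq (κ s)]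
    (rp : ∀ s, κ s → K) {rp0 PD qb lam : K} {s t : S} (hs : rp s 0 = rp0)
    {i : κ s} (hi : i ≠ 0) (j : κ t) (hlow : qb * (PD * rp0) ≤ lam)
    (hhigh : lam ≤ qb * (PD * rp t j + (1 - PD) * rp0)) :
    ∃ q ∈ segment K (controlDirac K s 0, controlDirac K s i)
        (controlDirac K t j, controlDirac K s 0),
      qb * puServiceRate rp rp0 PD q = lam := by
  refine exists_mem_segment_map_eq (qb • puServiceRate rp rp0 PD) ?_ ?_
  · rwa [LinearMap.smul_apply, puServiceRate_controlDirac_of_ne_zero rp rp0 PD 0 hi, hs]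
  · rwa [LinearMap.smul_apply, puServiceRate_controlDirac_zero]

theorem imperfect_sensing_qb_realizable_general
    (hpos : ∃ s, ∃ i : κ s, i ≠ 0)
    (rp : ∀ s, κ s → K) (rp0 : K) (hrp00 : ∀ s, rp s 0 = rp0) (hrp0pos : 0 < rp0)
    (lam PD : K) (hPDpos : 0 < PD)
    (rpmax : K) (hrpmax : IsGreatest {v | ∃ s i, v = rp s i} rpmax)
    (qb : K)
    (hlow : lam / (PD * rpmax + (1 - PD) * rp0) ≤ qb)
    (hhigh : qb ≤ lam / (PD * rp0)) :
    ∃ qB qE : ∀ s, κ s → K,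
      (∀ s i, 0 ≤ qB s i) ∧ (∀ s i, 0 ≤ qE s i) ∧
      (∑ s, ∑ i, qB s i) = 1 ∧ (∑ s, ∑ i, qE s i) = 1 ∧
      qb * PD * (∑ s, ∑ i, rp s i * qB s i)
        + qb * (1 - PD) * rp0 * (∑ s, qE s 0) = lam := by
  classical
  obtain ⟨s, i, hi⟩ := hpos
  obtain ⟨⟨t, j, rfl⟩, hmax⟩ := hrpmax
  have hrp0_le : rp0 ≤ rp t j := hmax ⟨s, 0, (hrp00 s).symm⟩
  have hrate_pos : 0 < PD * rp t j + (1 - PD) * rp0 := by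
    linear_combination hrp0pos + PD * hrp0_le
  obtain ⟨⟨qB, qE⟩, hq_mem, hbalance⟩ :=
    exists_mem_segment_mul_puServiceRate_eq rp (hrp00 s) hi j
      ((le_div_iff₀ (mul_pos hPDpos hrp0pos)).1 hhigh) ((div_le_iff₀ hrate_pos).1 hlow)
  obtain ⟨⟨hB_nonneg, hB_sum⟩, hE_nonneg, hE_sum⟩ :=
    (convex_controlSimplex.prod convex_controlSimplex).segment_subset
      ⟨controlDirac_mem_controlSimplex s 0, controlDirac_mem_controlSimplex s i⟩
      ⟨controlDirac_mem_controlSimplex t j, controlDirac_mem_controlSimplex s 0⟩ hq_mem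
  refine ⟨qB, qE, hB_nonneg, hE_nonneg, hB_sum, hE_sum, ?_⟩
  rw [← hbalance, puServiceRate_apply]
  ring

end RateBalance

end Controls

/-- **Proposition 2, sufficiency.** Under imperfect sensing, any `q_b` in the
stated interval admits conditional probabilities satisfying the rate-balance
equation. -/
theorem imperfect_sensing_qb_realizable
    {S : Type*} [Fintype S] [Nonempty S]
    (I : S → ℕ) (hI : ∀ s, 1 ≤ I s)
    (rp : (s : S) → Fin (I s + 1) → ℝ) (rp0 : ℝ)
    (hrp : ∀ s i, rp s i ∈ Set.Icc (0:ℝ) 1) (hrp00 : ∀ s, rp s 0 = rp0)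
    (hrp0pos : 0 < rp0) (hrp0le : rp0 ≤ 1)
    (hmono : ∀ s, Monotone (rp s))
    (lam : ℝ) (hlam : 0 ≤ lam)
    (PD : ℝ) (hPDpos : 0 < PD) (hPDle : PD ≤ 1)
    (rpmax : ℝ) (hrpmax : IsGreatest {v | ∃ s i, v = rp s i} rpmax)
    (qb : ℝ)
    (hlow : lam / (PD * rpmax + (1 - PD) * rp0) ≤ qb)
    (hhigh : qb ≤ min (lam / (PD * rp0)) 1) :
    ∃ qB qE : (s : S) → Fin (I s + 1) → ℝ,
      (∀ s i, 0 ≤ qB s i) ∧ (∀ s i, 0 ≤ qE s i) ∧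
      (∑ s, ∑ i, qB s i) = 1 ∧ (∑ s, ∑ i, qE s i) = 1 ∧
      qb * PD * (∑ s, ∑ i, rp s i * qB s i)
        + qb * (1 - PD) * rp0 * (∑ s, qE s 0) = lam := by
  obtain ⟨s⟩ := ‹Nonempty S›
  exact imperfect_sensing_qb_realizable_general
    ⟨s, Fin.last (I s), Fin.last_eq_zero_iff.not.2 (Nat.one_le_iff_ne_zero.1 (hI s))⟩
    rp rp0 hrp00 hrp0pos lam PD hPDpos rpmax hrpmax qb hlow (hhigh.trans (min_le_left _ _))
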